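/- Let β ∈ ℂ satisfy β² − 2β − 1 = 0 and set (c₀, …, c₈) = (1, 1, 1, 1, β, 1−β, 1−β, β−2, −1), c₉ = β−2, c₁₀ = β, c₁₁ = 1−β, c₁₂ = 1. Define the linear map L : ℂ⁶ → ℂ⁶ sending (θ₀, …, θ₅) to (θ₉, θ₁₂, θ₁₀, θ₂, θ₁₃, θ₁₁), where θ₆ = (c₆θ₅ − c₄θ₀)/c₉, θ₇ = −(c₇θ₅ + c₂θ₀)/c₉, θ₈ = (c₃θ₄ + c₀θ₃)/c₁₀, θ₉ = (−c₄θ₄ + c₁θ₃)/c₁₀, θ₁₀ = (c₀θ₁ − c₆θ₅ + c₄θ₀)/c₁₁, θ₁₁ = −(c₃c₉θ₁ − c₂c₆θ₅ + c₂c₄θ₀)/(c₁₁c₉), θ₁₂ = (c₆c₇θ₅ + c₂c₆θ₀ − c₃c₉θ₄ − c₀c₉θ₃)/(c₁₂c₉), θ₁₃ = (c₁₀c₇θ₅ + c₁₀c₂θ₀ − c₁c₃θ₄ − c₀c₁θ₃)/(c₁₀c₁₂). Then the 6×6 matrix of L satisfies det(t·I₆ − L) = t⁶ − 2t⁵ +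 t⁴ + t² − 2t + 1 for all t ∈ ℂ. -/

import Mathlib

/-!
In the eigenvalue equation `L θ = t θ`, the coordinates `0`, `2` and `3` express `θ₄`, `θ₅` and `θ₂`
through `θ₀`, `θ₁` and `θ₃` with coefficients polynomial in `t`. Hence `det (t - L)` is, up to sign,
the determinant of the `3 × 3` Schur complement that remains after this elimination, which
`β² = 2β + 1` reduces to `(t - 1)² (t⁴ + 1)`.
-/

namespace M036

open Matrix Polynomial

section CommRing

variable {R : Type*} [CommRing R] {m n : Type*} [Fintype m] [DecidableEq m] [Fintype n]
  [DecidableEq n]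

theorem det_fromBlocks_of_mul_self_eq_one {A : Matrix m m R} (hA : A * A = 1)
    (B : Matrix m n R) (C : Matrix n m R) (D : Matrix n n R) :
    (fromBlocks A B C D).det = A.det * (D - C * A * B).det := by
  let _ : Invertible A := ⟨A, hA, hA⟩
  exact det_fromBlocks₁₁ A B C D

theorem det_smul_one_sub_eq_eval_charpoly (M : Matrix n n R) (t : R) :
    (t • 1 - M).det = M.charpoly.eval t := by
  rw [eval_charpoly, scalar_apply, smul_one_eq_diagonal]

/-- The matrix of the map from bottom to top face variables of m036 at the Ptolemy solution with
parameter `β`. The parameter `δ` stands for `(β - 1)⁻¹`, and the other inverses are eliminated by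
`β⁻¹ = β - 2`, so that the matrix makes sense over a commutative ring. -/
def monodromyMatrix (β δ : R) : Matrix (Fin 6) (Fin 6) R :=
  !![0, 0, 0, β - 2, -1, 0;
     β * (1 - β), 0, 0, -1, -1, 1 - β;
     -(β * δ), -δ, 0, 0, 0, -1;
     0, 0, 1, 0, 0, 0;
     1, 0, 0, 2 - β, 2 - β, β - 2;
     β ^ 2 * δ, δ, 0, 0, 0, β]

/-- The coordinates of `t θ - L θ`, those that are solved for three of the variables first. -/
def rowOrder : Fin 3 ⊕ Fin 3 ≃ Fin 6 where
  toFun := Sum.elim ![0, 2, 3] ![1, 4, 5]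
  invFun := ![.inl 0, .inr 0, .inl 1, .inl 2, .inr 1, .inr 2]
  left_inv := by decide
  right_inv := by decide

/-- The variables `θ₀, …, θ₅`, the three that are eliminated first. -/
def colOrder : Fin 3 ⊕ Fin 3 ≃ Fin 6 where
  toFun := Sum.elim ![4, 5, 2] ![3, 0, 1]
  invFun := ![.inr 1, .inr 2, .inl 2, .inr 0, .inl 0, .inl 1]
  left_inv := by decide
  right_inv := by decide

theorem det_submatrix_rowOrder_colOrder (M : Matrix (Fin 6) (Fin 6) R) :
    (M.submatrix rowOrder colOrder).det = M.det := by
  have sign_eq_one : Equiv.Perm.sign (colOrder.symm.trans rowOrder) = 1 := by decide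
  simpa [sign_eq_one] using det_reindex rowOrder.symm colOrder.symm M

/-- The coefficients of the eliminated variables in the coordinates solved for them. -/
def pivotBlock (t : R) : Matrix (Fin 3) (Fin 3) R :=
  !![1, 0, 0;
     0, 1, t;
     0, 0, -1]

/-- The coefficients of the remaining variables in the coordinates solved for the eliminated
ones. -/
def upperBlock (t β δ : R) : Matrix (Fin 3) (Fin 3) R :=
  !![2 - β, t, 0;
     0, β * δ, δ;
     t, 0, 0]

/-- The coefficients of the eliminated variables in the remaining coordinates. -/
def lowerBlock (t β : R) : Matrix (Fin 3) (Fin 3) R :=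
  !![1, β - 1, 0;
     t + β - 2, 2 - β, 0;
     0, t - β, 0]

/-- The coefficients of the remaining variables in the remaining coordinates. -/
def remainingBlock (t β δ : R) : Matrix (Fin 3) (Fin 3) R :=
  !![1, β * (β - 1), t;
     β - 2, -1, 0;
     0, -(β ^ 2 * δ), -δ]

/-- The coefficients of the remaining variables in the remaining coordinates after the elimination,
that is, the Schur complement of `pivotBlock t`. -/
def reducedMatrix (t β δ : R) : Matrix (Fin 3) (Fin 3) R :=
  !![(β - 1) * (1 - t ^ 2), 1 - t, t - 1;
     (β - 2) * (t ^ 2 + t + β - 1), δ - 1 - t * (t + β - 2), (β - 2) * δ;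
     (β - t) * t ^ 2, -(β * δ * t), 1 - δ * t]

theorem submatrix_smul_one_sub_monodromyMatrix (t β δ : R) :
    (t • 1 - monodromyMatrix β δ).submatrix rowOrder colOrder =
      fromBlocks (pivotBlock t) (upperBlock t β δ) (lowerBlock t β) (remainingBlock t β δ) := by
  ext (i | i) (j | j) <;> fin_cases i <;> fin_cases j <;>
    simp [rowOrder, colOrder, monodromyMatrix, pivotBlock, upperBlock, lowerBlock, remainingBlock,
      one_apply] <;> ring

theorem pivotBlock_mul_self (t : R) : pivotBlock t * pivotBlock t = 1 := by
  simp [pivotBlock, ← one_fin_three]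

theorem det_pivotBlock (t : R) : (pivotBlock t).det = -1 := by
  simp [pivotBlock, det_fin_three]

theorem remainingBlock_sub_eq_reducedMatrix {β δ : R} (hβ : β ^ 2 - 2 * β - 1 = 0)
    (hδ : (β - 1) * δ = 1) (t : R) :
    remainingBlock t β δ - lowerBlock t β * pivotBlock t * upperBlock t β δ =
      reducedMatrix t β δ := by
  ext i j
  fin_cases i <;> fin_cases j <;>
    simp [pivotBlock, upperBlock, lowerBlock, remainingBlock, reducedMatrix] <;> grind

theorem det_reducedMatrix {β δ : R} (hβ : β ^ 2 - 2 * β - 1 = 0) (hδ : (β - 1) * δ = 1) (t : R) :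
    (reducedMatrix t β δ).det = -((t - 1) ^ 2 * (t ^ 4 + 1)) := by
  simp only [reducedMatrix, det_fin_three, of_apply, cons_val]
  grind

theorem det_smul_one_sub_monodromyMatrix {β δ : R} (hβ : β ^ 2 - 2 * β - 1 = 0)
    (hδ : (β - 1) * δ = 1) (t : R) :
    (t • 1 - monodromyMatrix β δ).det = (t - 1) ^ 2 * (t ^ 4 + 1) := by
  rw [← det_submatrix_rowOrder_colOrder, submatrix_smul_one_sub_monodromyMatrix,
    det_fromBlocks_of_mul_self_eq_one (pivotBlock_mul_self t), det_pivotBlock,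
    remainingBlock_sub_eq_reducedMatrix hβ hδ, det_reducedMatrix hβ hδ, neg_mul_neg, one_mul]

theorem charpoly_monodromyMatrix {β δ : R} (hβ : β ^ 2 - 2 * β - 1 = 0) (hδ : (β - 1) * δ = 1) :
    (monodromyMatrix β δ).charpoly = (X - 1) ^ 2 * (X ^ 4 + 1) := by
  have hCβ : C β ^ 2 - 2 * C β - 1 = 0 := by simpa [C_ofNat] using congrArg C hβ
  have hCδ : (C β - 1) * C δ = 1 := by simpa using congrArg C hδ
  have charmatrix_eq : (monodromyMatrix β δ).charmatrix =
      (X : R[X]) • 1 - monodromyMatrix (C β) (C δ) := by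
    ext1 i j
    fin_cases i <;> fin_cases j <;> simp [monodromyMatrix, one_apply, C_ofNat]
  rw [charpoly, charmatrix_eq, det_smul_one_sub_monodromyMatrix hCβ hCδ]

end CommRing

section Field

variable {K : Type*} [Field K]

/-- The Ptolemy coordinates `c₀, …, c₁₂` of the edges at the solution with parameter `β`, at scale
`1` and with trivial boundary obstruction class. -/
def ptolemySolution (β : K) : Fin 13 → K :=
  ![1, 1, 1, 1, β, 1 - β, 1 - β, β - 2, -1, β - 2, β, 1 - β, 1]

/-- The face variables `(θ₉, θ₁₂, θ₁₀, θ₂, θ₁₃, θ₁₁)` of the top surface, solved from the face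
equations of the four tetrahedra in terms of the face variables `θ₀, …, θ₅` of the bottom surface
and the Ptolemy coordinates `c`. -/
def topFaceVariables (c : Fin 13 → K) (θ : Fin 6 → K) : Fin 6 → K :=
  ![(-(c 4 * θ 4) + c 1 * θ 3) / c 10,
    (c 6 * c 7 * θ 5 + c 2 * c 6 * θ 0 - c 3 * c 9 * θ 4 - c 0 * c 9 * θ 3) / (c 12 * c 9),
    (c 0 * θ 1 - c 6 * θ 5 + c 4 * θ 0) / c 11,
    θ 2,
    (c 10 * c 7 * θ 5 + c 10 * c 2 * θ 0 - c 1 * c 3 * θ 4 - c 0 * c 1 * θ 3) / (c 10 * c 12),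
    -((c 3 * c 9 * θ 1 - c 2 * c 6 * θ 5 + c 2 * c 4 * θ 0) / (c 11 * c 9))]

theorem sub_one_ne_zero_of_two_ne_zero {β : K} (hβ : β ^ 2 - 2 * β - 1 = 0) (h2 : (2 : K) ≠ 0) :
    β - 1 ≠ 0 := by
  intro h
  exact h2 (by linear_combination (β - 1) * h - hβ)

theorem topFaceVariables_ptolemySolution {β : K} (hβ : β ^ 2 - 2 * β - 1 = 0)
    (h1 : β - 1 ≠ 0) (θ : Fin 6 → K) :
    topFaceVariables (ptolemySolution β) θ = monodromyMatrix β (β - 1)⁻¹ *ᵥ θ := by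
  have inv_eq : β⁻¹ = β - 2 := inv_eq_of_mul_eq_one_right (by linear_combination hβ)
  have sub_two_inv : (β - 2)⁻¹ = β := by rw [← inv_eq, inv_inv]
  have one_sub_inv : (1 - β)⁻¹ = -(β - 1)⁻¹ := by rw [← neg_sub, inv_neg]
  ext i
  fin_cases i <;>
    simp [topFaceVariables, ptolemySolution, monodromyMatrix, mulVec, dotProduct, Fin.sum_univ_six,
      div_eq_mul_inv, inv_eq, sub_two_inv, one_sub_inv] <;> grind

end Field

end M036

open M036 Polynomial in
theorem m036_C2_torsion_trivial_class_general {K : Type*} [Field K] (h2 : (2 : K) ≠ 0) (β : K)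
    (hβ : β ^ 2 - 2 * β - 1 = 0) (L : (Fin 6 → K) →ₗ[K] (Fin 6 → K))
    (hL : ∀ θ, L θ = topFaceVariables (ptolemySolution β) θ) :
    (LinearMap.toMatrix' L).charpoly = X ^ 6 - 2 * X ^ 5 + X ^ 4 + X ^ 2 - 2 * X + 1 := by
  have h1 : β - 1 ≠ 0 := sub_one_ne_zero_of_two_ne_zero hβ h2
  have L_eq : L = Matrix.toLin' (monodromyMatrix β (β - 1)⁻¹) :=
    LinearMap.ext fun θ => by
      rw [hL, topFaceVariables_ptolemySolution hβ h1, Matrix.toLin'_apply]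
  rw [L_eq, LinearMap.toMatrix'_toLin', charpoly_monodromyMatrix hβ (mul_inv_cancel₀ h1)]
  ring

/-- The C²-torsion polynomial of m036 (trivial boundary obstruction class):
`det(t·I − L) = t⁶ − 2t⁵ + t⁴ + t² − 2t + 1` for the linear map `L` sending the
face variables on the bottom surface to those on the top surface. -/
theorem m036_C2_torsion_trivial_class (β : ℂ) (hβ : β ^ 2 - 2 * β - 1 = 0)
    (L : (Fin 6 → ℂ) →ₗ[ℂ] (Fin 6 → ℂ))
    (hL : ∀ θ : Fin 6 → ℂ,
      let c0 : ℂ := 1; let c1 : ℂ := 1; let c2 : ℂ := 1; let c3 : ℂ := 1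
      let c4 : ℂ := β; let c5 : ℂ := 1 - β; let c6 : ℂ := 1 - β
      let c7 : ℂ := β - 2; let c8 : ℂ := -1
      let c9 : ℂ := β - 2; let c10 : ℂ := β; let c11 : ℂ := 1 - β; let c12 : ℂ := 1
      let θ6 : ℂ := (c6 * θ 5 - c4 * θ 0) / c9
      let θ7 : ℂ := -((c7 * θ 5 + c2 * θ 0) / c9)
      let θ8 : ℂ := (c3 * θ 4 + c0 * θ 3) / c10
      let θ9 : ℂ := (-(c4 * θ 4) + c1 * θ 3) / c10
      let θ10 : ℂ := (c0 * θ 1 - c6 * θ 5 + c4 * θ 0) / c11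
      let θ11 : ℂ := -((c3 * c9 * θ 1 - c2 * c6 * θ 5 + c2 * c4 * θ 0) / (c11 * c9))
      let θ12 : ℂ := (c6 * c7 * θ 5 + c2 * c6 * θ 0 - c3 * c9 * θ 4 - c0 * c9 * θ 3) / (c12 * c9)
      let θ13 : ℂ := (c10 * c7 * θ 5 + c10 * c2 * θ 0 - c1 * c3 * θ 4 - c0 * c1 * θ 3) / (c10 * c12)
      L θ = ![θ9, θ12, θ10, θ 2, θ13, θ11]) :
    ∀ t : ℂ,
      (t • (1 : Matrix (Fin 6) (Fin 6) ℂ) - LinearMap.toMatrix' L).det =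
        t ^ 6 - 2 * t ^ 5 + t ^ 4 + t ^ 2 - 2 * t + 1 := by
  intro t
  simp [M036.det_smul_one_sub_eq_eval_charpoly,
    m036_C2_torsion_trivial_class_general two_ne_zero β hβ L hL]
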